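/- arXiv:2507.14113 — 4 statements merged into one kernel-verified Lean document; each statement's English description precedes it below -/
import Mathlib

section
/- There exist compact metrizable spaces X₁ and X₂ and homeomorphisms T₁ : X₁ → X₁ and T₂ : X₂ → X₂ such that both dynamical systems (X₁,T₁) and (X₂,T₂) have dense periodic measures, but the product system (X₁ × X₂, T₁ × T₂) does not have dense periodic measures. -/
open MeasureTheory Topology

/-- A dynamical system `(X,T)` has *dense periodic measures* if the finitely supported
`T`-invariant Borel probability measures are dense (in the weak-* topology) in the space of
all `T`-invariant Borel probability measures. -/
def DensePeriodicMeasures {X : Type*} [TopologicalSpace X] [MeasurableSpace X]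
    [OpensMeasurableSpace X] (T : X → X) : Prop :=
  ∀ μ : ProbabilityMeasure X, μ.toMeasure.map T = μ.toMeasure →
    μ ∈ closure {ν : ProbabilityMeasure X |
      ν.toMeasure.map T = ν.toMeasure ∧ ∃ s : Finset X, ν.toMeasure ↑s = 1}

open Filter Set

lemma dpm_dense_of_approx {X : Type*} [MetricSpace X] [CompactSpace X] [MeasurableSpace X]
    [BorelSpace X] (T : X → X) (hT : Continuous T)
    (h : ∀ ε > 0, ∃ N > 0, ∃ π : X → X, Measurable π ∧ (range π).Finite ∧
      (∀ x, T^[N] (π x) = π x) ∧ ∀ x, ∀ j < N, dist (T^[j] x) (T^[j] (π x)) < ε) :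
    DensePeriodicMeasures T := by
  intro μ hμ
  have hTm : Measurable T := hT.measurable
  have hTj : ∀ j, Measurable (T^[j]) := fun j => hTm.iterate j
  have key : ∀ n : ℕ, ∃ ν : ProbabilityMeasure X,
      (ν.toMeasure.map T = ν.toMeasure ∧ ∃ s : Finset X, ν.toMeasure ↑s = 1) ∧
      ∀ f : C(X, ℝ), ∀ η > 0, (∀ x y, dist x y < 1 / ((n : ℝ) + 1) → dist (f x) (f y) ≤ η) →
        dist (∫ x, f x ∂ν.toMeasure) (∫ x, f x ∂μ.toMeasure) ≤ η := by
    intro n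
    obtain ⟨N, hN, π, hπ, hfin, hper, hclose⟩ := h (1 / ((n : ℝ) + 1)) (by positivity)
    have hm : ∀ j, Measurable (fun x => T^[j] (π x)) := fun j => (hTj j).comp hπ
    let m : Measure X := (N : ENNReal)⁻¹ • ∑ j ∈ Finset.range N,
      μ.toMeasure.map (fun x => T^[j] (π x))
    have hN0 : (N : ENNReal) ≠ 0 := by exact_mod_cast hN.ne'
    have hone : ∀ s : Set X, MeasurableSet s → (∀ j < N, ∀ x, T^[j] (π x) ∈ s) → m s = 1 := by
      intro s hs hj
      have : ∀ j ∈ Finset.range N, (μ.toMeasure.map (fun x => T^[j] (π x))) s = 1 := by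
        intro j hj'
        rw [Measure.map_apply (hm j) hs]
        have : (fun x => T^[j] (π x)) ⁻¹' s = univ := by
          ext x; simp [hj j (Finset.mem_range.1 hj') x]
        rw [this]; simp
      simp only [m, Measure.smul_apply, Measure.finsetSum_apply, smul_eq_mul]
      rw [Finset.sum_congr rfl this]
      simp [ENNReal.inv_mul_cancel hN0 (ENNReal.natCast_ne_top N)]
    have hprob : IsProbabilityMeasure m := ⟨hone univ MeasurableSet.univ (by simp)⟩
    refine ⟨⟨m, hprob⟩, ⟨?_, ?_⟩, ?_⟩
    · change m.map T = m
      simp only [m]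
      rw [Measure.map_smul, Measure.map_finset_sum hTm.aemeasurable]
      congr 1
      have h1 : ∀ j, (μ.toMeasure.map (fun x => T^[j] (π x))).map T
          = μ.toMeasure.map (fun x => T^[j+1] (π x)) := by
        intro j
        rw [Measure.map_map hTm (hm j)]
        congr 1
        ext x
        simp [Function.iterate_succ_apply']
      simp only [h1]
      obtain ⟨M, rfl⟩ : ∃ M, N = M + 1 := ⟨N - 1, by omega⟩
      rw [Finset.sum_range_succ, Finset.sum_range_succ']
      congr 2
      ext x
      simpa using hper x
    · have hS : (⋃ j ∈ Finset.range N, T^[j] '' range π).Finite :=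
        Set.Finite.biUnion (Finset.finite_toSet _) (fun j _ => hfin.image _)
      refine ⟨hS.toFinset, ?_⟩
      change m _ = 1
      refine hone _ (Finset.measurableSet _) ?_
      intro j hj x
      simp only [Finite.coe_toFinset, mem_iUnion]
      exact ⟨j, Finset.mem_range.2 hj, π x, ⟨x, rfl⟩, rfl⟩
    · intro f η hη hf
      change dist (∫ x, f x ∂m) _ ≤ η
      have hint : ∀ (g : X → X), Measurable g → Integrable (fun x => f (g x)) μ.toMeasure := by
        intro g hg
        refine Integrable.of_bound (f.continuous.measurable.comp hg).aestronglyMeasurable ‖f‖ ?_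
        exact Eventually.of_forall (fun x => f.norm_coe_le_norm _)
      have hint' : ∀ j ∈ Finset.range N,
          Integrable f (μ.toMeasure.map (fun x => T^[j] (π x))) := by
        intro j _
        rw [integrable_map_measure f.continuous.aestronglyMeasurable (hm j).aemeasurable]
        exact hint _ (hm j)
      have e1 : ∫ x, f x ∂m = (N : ℝ)⁻¹ * ∑ j ∈ Finset.range N, ∫ x, f (T^[j] (π x)) ∂μ.toMeasure := by
        simp only [m]
        rw [integral_smul_measure, integral_finsetSum_measure hint']
        simp only [ENNReal.toReal_inv, ENNReal.toReal_natCast, smul_eq_mul]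
        congr 1
        refine Finset.sum_congr rfl (fun j _ => ?_)
        rw [integral_map (hm j).aemeasurable f.continuous.aestronglyMeasurable]
      have hmp : MeasurePreserving T μ.toMeasure μ.toMeasure := ⟨hTm, hμ⟩
      have e2 : ∀ j, ∫ x, f (T^[j] x) ∂μ.toMeasure = ∫ x, f x ∂μ.toMeasure := by
        intro j
        have := (hmp.iterate j).map_eq
        conv_rhs => rw [← this]
        rw [integral_map (hTj j).aemeasurable f.continuous.aestronglyMeasurable]
      have hNr : (0 : ℝ) < N := by exact_mod_cast hN
      have e3 : ∫ x, f x ∂m - ∫ x, f x ∂μ.toMeasure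
          = (N : ℝ)⁻¹ * ∑ j ∈ Finset.range N,
            (∫ x, (f (T^[j] (π x)) - f (T^[j] x)) ∂μ.toMeasure) := by
        rw [e1]
        have : ∀ j ∈ Finset.range N, ∫ x, (f (T^[j] (π x)) - f (T^[j] x)) ∂μ.toMeasure
          = ∫ x, f (T^[j] (π x)) ∂μ.toMeasure - ∫ x, f x ∂μ.toMeasure := by
          intro j _
          rw [integral_sub (hint _ (hm j)) (hint _ (hTj j)), e2]
        rw [Finset.sum_congr rfl this, Finset.sum_sub_distrib]
        simp only [Finset.sum_const, Finset.card_range, nsmul_eq_mul]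
        field_simp
      rw [Real.dist_eq, e3, abs_mul, abs_of_pos (inv_pos.2 hNr)]
      have e4 : |∑ j ∈ Finset.range N, (∫ x, (f (T^[j] (π x)) - f (T^[j] x)) ∂μ.toMeasure)|
          ≤ N * η := by
        refine (Finset.abs_sum_le_sum_abs _ _).trans ?_
        have : ∀ j ∈ Finset.range N,
            |∫ x, (f (T^[j] (π x)) - f (T^[j] x)) ∂μ.toMeasure| ≤ η := by
          intro j hj
          have := norm_integral_le_of_norm_le_const (μ := μ.toMeasure) (C := η)
            (f := fun x => f (T^[j] (π x)) - f (T^[j] x)) (Eventually.of_forall (fun x => by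
              rw [← dist_eq_norm, dist_comm]
              exact hf _ _ (hclose x j (Finset.mem_range.1 hj))))
          simpa using this
        refine (Finset.sum_le_sum this).trans ?_
        simp
      calc (N : ℝ)⁻¹ * _ ≤ (N : ℝ)⁻¹ * (N * η) := by gcongr
        _ = η := by field_simp
  choose ν hν1 hν2 using key
  refine mem_closure_of_tendsto (f := ν) (b := atTop) ?_ (Eventually.of_forall hν1)
  rw [ProbabilityMeasure.tendsto_iff_forall_integral_tendsto]
  intro f
  rw [Metric.tendsto_atTop]
  intro ε hε
  have hu : UniformContinuous f := CompactSpace.uniformContinuous_of_continuous f.continuous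
  obtain ⟨δ, hδ, hd⟩ := Metric.uniformContinuous_iff.1 hu (ε / 2) (by positivity)
  obtain ⟨n0, hn0⟩ := exists_nat_one_div_lt hδ
  refine ⟨n0, fun n hn => ?_⟩
  have := hν2 n f.toContinuousMap (ε / 2) (by positivity) (fun x y hxy => (hd (hxy.trans
    (lt_of_le_of_lt (by gcongr) hn0))).le)
  have h2 : dist (∫ x, f x ∂(ν n).toMeasure) (∫ x, f x ∂μ.toMeasure) ≤ ε / 2 := this
  linarith

lemma dpm_round {X : Type*} [MetricSpace X] [CompactSpace X] [Nonempty X] [MeasurableSpace X]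
    [BorelSpace X] (ε : ℝ) (hε : 0 < ε) :
    ∃ r : X → X, Measurable r ∧ (range r).Finite ∧ ∀ x, dist x (r x) < ε := by
  let e := TopologicalSpace.denseSeq X
  have hcov : (univ : Set X) ⊆ ⋃ n, Metric.ball (e n) ε := by
    intro x _
    obtain ⟨n, hn⟩ := (TopologicalSpace.denseRange_denseSeq X).exists_dist_lt x hε
    exact mem_iUnion.2 ⟨n, hn⟩
  obtain ⟨t, ht⟩ := isCompact_univ.elim_finite_subcover _ (fun n => Metric.isOpen_ball) hcov
  refine ⟨SimpleFunc.nearestPt e (t.sup id), SimpleFunc.measurable _, SimpleFunc.finite_range _, ?_⟩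
  intro x
  obtain ⟨n, hn, hx⟩ : ∃ n ∈ t, x ∈ Metric.ball (e n) ε := by simpa using ht (mem_univ x)
  have := SimpleFunc.edist_nearestPt_le e x (Finset.le_sup (f := id) hn)
  rw [edist_dist, edist_dist, ENNReal.ofReal_le_ofReal_iff dist_nonneg] at this
  rw [dist_comm]
  refine this.trans_lt ?_
  rw [dist_comm]; exact hx

noncomputable def dpmRot (K : Set ℝ) : (K × UnitAddCircle) ≃ₜ (K × UnitAddCircle) where
  toFun p := (p.1, p.2 + ((p.1 : ℝ) : UnitAddCircle))
  invFun p := (p.1, p.2 - ((p.1 : ℝ) : UnitAddCircle))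
  left_inv p := by simp
  right_inv p := by simp
  continuous_toFun := by
    have := AddCircle.continuous_mk' (1 : ℝ)
    fun_prop
  continuous_invFun := by
    have := AddCircle.continuous_mk' (1 : ℝ)
    fun_prop

lemma dpmRot_iterate (K : Set ℝ) (j : ℕ) (p : K × UnitAddCircle) :
    (dpmRot K)^[j] p = (p.1, p.2 + (((j : ℝ) * (p.1 : ℝ) : ℝ) : UnitAddCircle)) := by
  induction j with
  | zero => simp
  | succ j ih =>
    rw [Function.iterate_succ_apply', ih]
    simp only [dpmRot, Homeomorph.homeomorph_mk_coe, Equiv.coe_fn_mk, Prod.mk.injEq, true_and]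
    rw [add_assoc, ← AddCircle.coe_add]
    congr 2
    push_cast; ring

lemma dpmRot_dense (K : Set ℝ) (hK : IsCompact K)
    (h : ∀ ε > 0, ∃ N : ℕ, 0 < N ∧ ∃ κ : K → K, Measurable κ ∧ (range κ).Finite ∧
      (∀ a, ∃ z : ℤ, (N : ℝ) * (κ a : ℝ) = z) ∧ ∀ a : K, (N : ℝ) * |(a : ℝ) - κ a| < ε) :
    DensePeriodicMeasures (dpmRot K) := by
  have : CompactSpace K := isCompact_iff_compactSpace.1 hK
  refine dpm_dense_of_approx _ (dpmRot K).continuous ?_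
  intro ε hε
  obtain ⟨N, hN, κ, hκ, hfin, hper, hclose⟩ := h (ε / 2) (by positivity)
  obtain ⟨r, hr, hrfin, hrd⟩ := dpm_round (X := UnitAddCircle) (ε / 2) (by positivity)
  have hN1 : (1 : ℝ) ≤ N := by exact_mod_cast hN
  refine ⟨N, hN, fun p => (κ p.1, r p.2), by fun_prop, ?_, ?_, ?_⟩
  · refine (hfin.prod hrfin).subset ?_
    rintro _ ⟨p, rfl⟩
    exact ⟨⟨_, rfl⟩, ⟨_, rfl⟩⟩
  · intro p
    rw [dpmRot_iterate]
    obtain ⟨z, hz⟩ := hper p.1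
    simp only [hz, Prod.mk.injEq, true_and, add_eq_left]
    exact (AddCircle.coe_eq_zero_iff 1).2 ⟨z, by simp⟩
  · intro p j hj
    rw [dpmRot_iterate, dpmRot_iterate, Prod.dist_eq, max_lt_iff]
    have hc := hclose p.1
    have hjN : (j : ℝ) ≤ N := by exact_mod_cast hj.le
    constructor
    · rw [Subtype.dist_eq, Real.dist_eq]
      have : |(p.1 : ℝ) - κ p.1| ≤ N * |(p.1 : ℝ) - κ p.1| :=
        le_mul_of_one_le_left (abs_nonneg _) hN1
      simp only
      linarith
    · refine (dist_add_add_le _ _ _ _).trans_lt ?_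
      have h1 := hrd p.2
      have h2 : dist (((j : ℝ) * (p.1 : ℝ) : ℝ) : UnitAddCircle)
          (((j : ℝ) * (κ p.1 : ℝ) : ℝ) : UnitAddCircle) ≤ N * |(p.1 : ℝ) - κ p.1| := by
        rw [dist_eq_norm, ← AddCircle.coe_sub]
        refine (QuotientAddGroup.norm_mk_le_norm).trans ?_
        rw [← mul_sub, norm_mul, Real.norm_eq_abs, Real.norm_eq_abs, abs_of_nonneg (by positivity)]
        gcongr
      simp only
      linarith

open LiouvilleNumber in
lemma dpm_numbers : ∃ (α : ℝ) (p : ℕ → ℝ), Irrational α ∧ StrictMono p ∧ (∀ n, 0 < p n) ∧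
    (∀ n, p n < α) ∧ α < 1 ∧ (∀ ε > 0, ∃ n0, ∀ k ≥ n0, ∃ N : ℕ, 0 < N ∧
      (∀ m ≤ k, ∃ z : ℤ, (N : ℝ) * p m = z) ∧ (N : ℝ) * (α - p k) < ε) := by
  have h3 : (1 : ℝ) < 3 := by norm_num
  have hadd := fun k => partialSum_add_remainder h3 k
  have hlt := fun k => remainder_lt k (m := 3) (by norm_num)
  have hpos := fun k => remainder_pos h3 k
  refine ⟨liouvilleNumber 3, partialSum 3, ?_, ?_, ?_, ?_, ?_, ?_⟩
  · exact_mod_cast (liouville_liouvilleNumber (m := 3) (by norm_num)).irrational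
  · refine strictMono_nat_of_lt_succ (fun n => ?_)
    rw [partialSum_succ]
    have : (0 : ℝ) < 1 / 3 ^ (n + 1).factorial := by positivity
    linarith
  · intro n
    exact Finset.sum_pos (fun i _ => by positivity) (by simp)
  · intro n
    have := hadd n; have := hpos n; linarith
  · have h1 := hadd 2
    have h2 := hlt 2
    have : partialSum 3 2 = 7 / 9 := by
      simp [partialSum, Finset.sum_range_succ, Nat.factorial]; norm_num
    norm_num [Nat.factorial] at h2
    linarith
  · intro ε hε
    obtain ⟨n0, hn0⟩ := exists_nat_one_div_lt hε
    refine ⟨n0 + 2, fun k hk => ⟨3 ^ k.factorial, by positivity, ?_, ?_⟩⟩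
    · intro m hm
      obtain ⟨q, hq⟩ := partialSum_eq_rat (m := 3) (by norm_num) m
      obtain ⟨d, hd⟩ : (3 : ℕ) ^ m.factorial ∣ 3 ^ k.factorial :=
        pow_dvd_pow _ (Nat.factorial_le hm)
      refine ⟨d * q, ?_⟩
      have hq' : partialSum 3 m = q / ((3 ^ m.factorial : ℕ) : ℝ) := by exact_mod_cast hq
      rw [hq', hd]
      have : ((3 ^ m.factorial : ℕ) : ℝ) ≠ 0 := by positivity
      push_cast
      push_cast at this
      field_simp
    · have h1 : liouvilleNumber 3 - partialSum 3 k = remainder 3 k := by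
        have := hadd k; linarith
      rw [h1]
      push_cast
      obtain ⟨l, rfl⟩ : ∃ l, k = l + 1 := ⟨k - 1, by omega⟩
      have hx : (0 : ℝ) < 3 ^ (l + 1).factorial := by positivity
      have h2 : (3 : ℝ) ^ (l + 1).factorial * remainder 3 (l + 1)
          < 1 / (3 ^ (l + 1).factorial) ^ l := by
        calc _ < (3 : ℝ) ^ (l + 1).factorial * (1 / (3 ^ (l+1).factorial) ^ (l + 1)) := by
              gcongr; exact hlt _
          _ = _ := by rw [pow_succ]; field_simp
      refine h2.trans_le (le_trans ?_ hn0.le)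
      have h4 : (l : ℝ) ≤ (3 ^ (l + 1).factorial) ^ l := by
        have : l ≤ (3 ^ (l + 1).factorial) ^ l := by
          refine (Nat.lt_pow_self (n := l) (a := 3) (by norm_num)).le.trans ?_
          gcongr
          exact Nat.le_self_pow (Nat.factorial_ne_zero _) 3
        exact_mod_cast this
      have h5 : (n0 : ℝ) + 1 ≤ l := by exact_mod_cast (by omega : n0 + 1 ≤ l)
      exact one_div_le_one_div_of_le (by positivity) (h5.trans h4)

lemma dpm_family_dense (α : ℝ) (p : ℕ → ℝ) (hp : StrictMono p)
    (hpα : ∀ n, p n < α) (happ : ∀ ε > 0, ∃ n0, ∀ k ≥ n0, ∃ N : ℕ, 0 < N ∧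
      (∀ m ≤ k, ∃ z : ℤ, (N : ℝ) * p m = z) ∧ (N : ℝ) * (α - p k) < ε) (i : ℕ) :
    IsCompact (insert α (range fun n => p (2 * n + i))) ∧
    DensePeriodicMeasures (dpmRot (insert α (range fun n => p (2 * n + i)))) := by
  have hcomp : IsCompact (insert α (range fun n => p (2 * n + i))) := by
    refine Tendsto.isCompact_insert_range ?_
    rw [Metric.tendsto_atTop]
    intro ε hε
    obtain ⟨n0, hn0⟩ := happ ε hε
    refine ⟨n0, fun n hn => ?_⟩
    obtain ⟨N, hN, -, h⟩ := hn0 (2 * n + i) (by omega)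
    have hN1 : (1 : ℝ) ≤ N := by exact_mod_cast hN
    have := hpα (2 * n + i)
    rw [dist_comm, Real.dist_eq, abs_of_pos (by linarith)]
    nlinarith
  refine ⟨hcomp, dpmRot_dense _ hcomp ?_⟩
  intro ε hε
  obtain ⟨n0, hn0⟩ := happ ε hε
  obtain ⟨N, hN, hper, hlt⟩ := hn0 (2 * n0 + i) (by omega)
  have hN0 : (0 : ℝ) < N := by exact_mod_cast hN
  set k := 2 * n0 + i with hk
  have hpk : p k ∈ insert α (range fun n => p (2 * n + i)) := Or.inr ⟨n0, rfl⟩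
  have hmin : ∀ a : (insert α (range fun n => p (2 * n + i)) : Set ℝ),
      min (a : ℝ) (p k) ∈ insert α (range fun n => p (2 * n + i)) := by
    intro a
    rcases min_choice (a : ℝ) (p k) with h | h <;> rw [h]
    · exact a.2
    · exact hpk
  have hmin2 : ∀ a : (insert α (range fun n => p (2 * n + i)) : Set ℝ),
      ∃ m ≤ k, min (a : ℝ) (p k) = p m := by
    rintro ⟨a, rfl | ⟨n, rfl⟩⟩
    · exact ⟨k, le_rfl, min_eq_right (hpα k).le⟩
    · simp only
      rcases le_total (2 * n + i) k with h | h
      · exact ⟨_, h, min_eq_left (hp.monotone h)⟩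
      · exact ⟨k, le_rfl, min_eq_right (hp.monotone h)⟩
  refine ⟨N, hN, fun a => ⟨min (a : ℝ) (p k), hmin a⟩, ?_, ?_, ?_, ?_⟩
  · exact Measurable.subtype_mk (by fun_prop)
  · have : (Subtype.val ⁻¹' (p '' Iic k) :
        Set (insert α (range fun n => p (2 * n + i)) : Set ℝ)).Finite :=
      ((finite_Iic k).image p).preimage Subtype.val_injective.injOn
    refine this.subset ?_
    rintro _ ⟨a, rfl⟩
    obtain ⟨m, hm, h⟩ := hmin2 a
    exact ⟨m, hm, h.symm⟩
  · intro a
    obtain ⟨m, hm, h⟩ := hmin2 a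
    simp only [h]
    exact hper m hm
  · intro a
    have ha : (a : ℝ) ≤ α := by
      rcases a with ⟨a, rfl | ⟨n, rfl⟩⟩
      · exact le_rfl
      · exact (hpα _).le
    refine lt_of_le_of_lt ?_ hlt
    gcongr
    simp only
    have := hpα k
    rcases min_cases (a : ℝ) (p k) with h | h <;> rw [h.1]
    · simp; linarith
    · rw [abs_of_pos (by linarith)]; linarith

lemma dpm_not_dense (K L : Set ℝ) (α : ℝ) (hα : Irrational α) (hK : α ∈ K) (hL : α ∈ L)
    [CompactSpace K] [CompactSpace L]
    (hKL : ∀ a ∈ K, ∀ b ∈ L, (∃ z : ℤ, a - b = z) → a = α ∧ b = α) :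
    ¬ DensePeriodicMeasures (fun p : (K × UnitAddCircle) × (L × UnitAddCircle) =>
      (dpmRot K p.1, dpmRot L p.2)) := by
  intro hD
  have hsing : MeasurableSingletonClass ((K × UnitAddCircle) × (L × UnitAddCircle)) :=
    ⟨fun x => isClosed_singleton.measurableSet⟩
  set T : (K × UnitAddCircle) × (L × UnitAddCircle) → (K × UnitAddCircle) × (L × UnitAddCircle) :=
    fun p => (dpmRot K p.1, dpmRot L p.2) with hTdef
  have hTc : Continuous T := by
    have h1 := (dpmRot K).continuous
    have h2 := (dpmRot L).continuous
    fun_prop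
  have hTm : Measurable T := hTc.measurable
  have hTinj : Function.Injective T := by
    rintro ⟨x, y⟩ ⟨x', y'⟩ h
    simp only [hTdef, Prod.mk.injEq, EmbeddingLike.apply_eq_iff_eq] at h
    simp [h.1, h.2]
  have hTj : ∀ (j : ℕ) p, T^[j] p = ((dpmRot K)^[j] p.1, (dpmRot L)^[j] p.2) := by
    intro j p
    induction j with
    | zero => rfl
    | succ j ih => simp only [Function.iterate_succ_apply', ih]; rfl
  -- the test function
  let F : (K × UnitAddCircle) × (L × UnitAddCircle) → ℂ :=
    fun p => (AddCircle.toCircle (p.1.2 - p.2.2) : ℂ)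
  have hFc : Continuous F := by
    have := AddCircle.continuous_toCircle (T := (1 : ℝ))
    fun_prop
  let c : (K × UnitAddCircle) × (L × UnitAddCircle) → ℂ :=
    fun p => (AddCircle.toCircle ((((p.1.1 : ℝ) - (p.2.1 : ℝ) : ℝ)) : UnitAddCircle) : ℂ)
  have hcc : Continuous c := by
    have := AddCircle.continuous_toCircle (T := (1 : ℝ))
    have := AddCircle.continuous_mk' (1 : ℝ)
    fun_prop
  have hcT : ∀ p, c (T p) = c p := fun p => rfl
  have hFT : ∀ p, F (T p) = c p * F p := by
    intro p
    simp only [F, c, hTdef, dpmRot, Homeomorph.homeomorph_mk_coe, Equiv.coe_fn_mk]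
    rw [← Circle.coe_mul, ← AddCircle.toCircle_add, AddCircle.coe_sub]
    congr 2
    abel
  have hc1 : ∀ p, c p = 1 → (p.1.1 : ℝ) = α ∧ (p.2.1 : ℝ) = α := by
    intro p hp
    refine hKL _ p.1.1.2 _ p.2.1.2 ?_
    have h1 : AddCircle.toCircle ((((p.1.1 : ℝ) - (p.2.1 : ℝ) : ℝ)) : UnitAddCircle)
        = AddCircle.toCircle (0 : UnitAddCircle) := by
      rw [AddCircle.toCircle_zero]
      exact Circle.ext hp
    have h2 := AddCircle.injective_toCircle one_ne_zero h1
    obtain ⟨z, hz⟩ := (AddCircle.coe_eq_zero_iff 1).1 h2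
    exact ⟨z, by simpa using hz.symm⟩
  let G : C((K × UnitAddCircle) × (L × UnitAddCircle), ℝ) := ⟨fun p => (F p).re, by fun_prop⟩
  let g := BoundedContinuousFunction.mkOfCompact G
  -- periodic measures kill the test function
  have hzero : ∀ ν : ProbabilityMeasure ((K × UnitAddCircle) × (L × UnitAddCircle)),
      (ν.toMeasure.map T = ν.toMeasure ∧ ∃ s : Finset ((K × UnitAddCircle) × (L × UnitAddCircle)), ν.toMeasure ↑s = 1) →
      ∫ p, g p ∂ν.toMeasure = 0 := by
    rintro ν ⟨hinv, s, hs⟩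
    have hmp : MeasurePreserving T ν.toMeasure ν.toMeasure := ⟨hTm, hinv⟩
    have hs' : ν.toMeasure (↑s)ᶜ = 0 := (prob_compl_eq_zero_iff s.measurableSet).2 hs
    have hres : ν.toMeasure.restrict ↑s = ν.toMeasure :=
      Measure.restrict_eq_self_of_ae_mem (by rw [ae_iff]; exact hs')
    have hint : ∀ f : (K × UnitAddCircle) × (L × UnitAddCircle) → ℂ, Integrable f ν.toMeasure := by
      intro f
      have : IntegrableOn f ↑s ν.toMeasure := IntegrableOn.of_finite s.finite_toSet
      rwa [IntegrableOn, hres] at this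
    have hpt : ∀ p, c p = 1 → ν.toMeasure {p} = 0 := by
      intro p hp
      by_contra hne
      have hall : ∀ j, T^[j] p ∈ (↑s : Set _) := by
        intro j
        by_contra hnot
        have h1 : ν.toMeasure {T^[j] p} = 0 :=
          measure_mono_null (by simpa using hnot) hs'
        have h2 := (hmp.iterate j).measure_preimage
          (measurableSet_singleton (T^[j] p)).nullMeasurableSet
        rw [h1] at h2
        exact hne (measure_mono_null (by simp) h2)
      obtain ⟨m, n, hmn, heq⟩ : ∃ m n : ℕ, m < n ∧ T^[m] p = T^[n] p := by
        obtain ⟨m, -, n, -, hne', he⟩ := infinite_univ.exists_ne_map_eq_of_mapsTo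
          (f := fun j : ℕ => T^[j] p) (fun j _ => hall j) s.finite_toSet
        rcases lt_or_gt_of_ne hne' with h | h
        · exact ⟨m, n, h, he⟩
        · exact ⟨n, m, h, he.symm⟩
      rw [hTj, hTj, dpmRot_iterate, dpmRot_iterate, dpmRot_iterate, dpmRot_iterate] at heq
      have h3 := congrArg (fun q => q.1.2) heq
      simp only [add_right_inj, (hc1 p hp).1] at h3
      have h4 : (((n : ℝ) * α - m * α : ℝ) : UnitAddCircle) = 0 := by
        rw [AddCircle.coe_sub, h3, sub_self]
      obtain ⟨z, hz⟩ := (AddCircle.coe_eq_zero_iff 1).1 h4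
      have h5 : Irrational (((n - m : ℕ) : ℝ) * α) := hα.natCast_mul (by omega)
      refine h5 ⟨z, ?_⟩
      rw [Nat.cast_sub hmn.le]
      simp at hz
      rw [sub_mul, ← hz]; simp
    have hc_ae : ∀ᵐ p ∂ν.toMeasure, c p ≠ 1 := by
      rw [ae_iff]
      have : {p | ¬ c p ≠ 1} ⊆ (↑s)ᶜ ∪ ⋃ p ∈ {p | p ∈ s ∧ c p = 1}, {p} := by
        intro p hp
        by_cases h : p ∈ s
        · right; simpa [h] using hp
        · left; simpa using h
      refine measure_mono_null this (measure_union_null hs' ?_)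
      refine (measure_biUnion_null_iff ?_).2 (fun p hp => hpt p hp.2)
      exact (s.finite_toSet.subset (fun p hp => hp.1)).countable
    let h : (K × UnitAddCircle) × (L × UnitAddCircle) → ℂ := fun p => F p / (c p - 1)
    have e1 : ∫ p, h (T p) ∂ν.toMeasure = ∫ p, h p ∂ν.toMeasure := by
      have := integral_map (μ := ν.toMeasure) (φ := T) hTm.aemeasurable (f := h)
        (by rw [hinv]; exact (hint h).1)
      rw [hinv] at this
      exact this.symm
    have e2 : ∫ p, F p ∂ν.toMeasure = ∫ p, (h (T p) - h p) ∂ν.toMeasure := by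
      refine integral_congr_ae ?_
      filter_upwards [hc_ae] with p hp
      have : c p - 1 ≠ 0 := sub_ne_zero.2 hp
      simp only [h, hFT, hcT]
      field_simp
    have e3 : ∫ p, F p ∂ν.toMeasure = 0 := by
      rw [e2, integral_sub (hint _) (hint _), e1, sub_self]
    have e4 := integral_re (hint F)
    change ∫ p, (F p).re ∂ν.toMeasure = 0
    have e5 : ∫ p, (F p).re ∂ν.toMeasure = (∫ p, F p ∂ν.toMeasure).re := e4
    rw [e5, e3, Complex.zero_re]
  -- the diagonal measure
  let D : UnitAddCircle → (K × UnitAddCircle) × (L × UnitAddCircle) :=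
    fun x => ((⟨α, hK⟩, x), (⟨α, hL⟩, x))
  have hDm : Measurable D := by fun_prop
  have hvol : IsProbabilityMeasure (AddCircle.haarAddCircle (T := (1 : ℝ))) := inferInstance
  let μ : ProbabilityMeasure ((K × UnitAddCircle) × (L × UnitAddCircle)) :=
    ⟨(AddCircle.haarAddCircle (T := (1 : ℝ))).map D, Measure.isProbabilityMeasure_map hDm.aemeasurable⟩
  have hμ : μ.toMeasure.map T = μ.toMeasure := by
    change ((AddCircle.haarAddCircle (T := (1 : ℝ))).map D).map T
      = (AddCircle.haarAddCircle (T := (1 : ℝ))).map D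
    rw [Measure.map_map hTm hDm]
    have : T ∘ D = D ∘ (fun x => x + ((α : ℝ) : UnitAddCircle)) := rfl
    rw [this, ← Measure.map_map hDm (by fun_prop), map_add_right_eq_self]
  have hcl := hD μ hμ
  have hclosed : IsClosed {ν : ProbabilityMeasure ((K × UnitAddCircle) × (L × UnitAddCircle)) |
      ∫ p, g p ∂ν.toMeasure = 0} :=
    isClosed_eq (ProbabilityMeasure.continuous_integral_boundedContinuousFunction g)
      continuous_const
  have h0 : ∫ p, g p ∂μ.toMeasure = 0 := closure_minimal hzero hclosed hcl
  have h1 : ∫ p, g p ∂μ.toMeasure = 1 := by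
    change ∫ p, g p ∂((AddCircle.haarAddCircle (T := (1 : ℝ))).map D) = 1
    rw [integral_map hDm.aemeasurable g.continuous.aestronglyMeasurable]
    have : ∀ x, g (D x) = 1 := by
      intro x
      change ((AddCircle.toCircle (x - x) : Circle) : ℂ).re = 1
      simp
    simp [this]
  linarith

/-- There exist two dynamical systems (compact metrizable spaces with homeomorphisms) having
dense periodic measures whose product does not have dense periodic measures. -/
theorem exists_product_without_dense_periodic_measures :
    ∃ (X₁ X₂ : Type) (_ : MetricSpace X₁) (_ : MetricSpace X₂)
      (_ : CompactSpace X₁) (_ : CompactSpace X₂)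
      (_ : SecondCountableTopology X₁) (_ : SecondCountableTopology X₂)
      (_ : MeasurableSpace X₁) (_ : MeasurableSpace X₂)
      (_ : BorelSpace X₁) (_ : BorelSpace X₂)
      (T₁ : X₁ ≃ₜ X₁) (T₂ : X₂ ≃ₜ X₂),
      DensePeriodicMeasures ⇑T₁ ∧ DensePeriodicMeasures ⇑T₂ ∧
        ¬ DensePeriodicMeasures (fun p : X₁ × X₂ => (T₁ p.1, T₂ p.2)) := by
  obtain ⟨α, p, hα, hp, hp0, hpα, hα1, happ⟩ := dpm_numbers
  obtain ⟨hc0, hd0⟩ := dpm_family_dense α p hp hpα happ 0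
  obtain ⟨hc1, hd1⟩ := dpm_family_dense α p hp hpα happ 1
  have i0 := isCompact_iff_compactSpace.1 hc0
  have i1 := isCompact_iff_compactSpace.1 hc1
  have hbd : ∀ i, ∀ a ∈ insert α (range fun n => p (2 * n + i)), 0 < a ∧ a < 1 := by
    rintro i a (rfl | ⟨n, rfl⟩)
    · exact ⟨(hp0 0).trans (hpα 0), hα1⟩
    · exact ⟨hp0 _, (hpα _).trans hα1⟩
  refine ⟨(insert α (range fun n => p (2 * n + 0)) : Set ℝ) × UnitAddCircle,
    (insert α (range fun n => p (2 * n + 1)) : Set ℝ) × UnitAddCircle,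
    inferInstance, inferInstance, inferInstance, inferInstance, inferInstance, inferInstance,
    inferInstance, inferInstance, inferInstance, inferInstance, dpmRot _, dpmRot _, hd0, hd1, ?_⟩
  refine dpm_not_dense _ _ α hα (mem_insert _ _) (mem_insert _ _) ?_
  intro a ha b hb ⟨z, hz⟩
  have h1 := hbd 0 a ha
  have h2 := hbd 1 b hb
  have hz1 : (z : ℝ) < 1 := by linarith
  have hz2 : (-1 : ℝ) < z := by linarith
  have hz0 : z = 0 := by
    have h3 : z < 1 := by exact_mod_cast hz1
    have h4 : -1 < z := by exact_mod_cast hz2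
    omega
  have hab : a = b := by rw [hz0] at hz; simp at hz; linarith
  subst hab
  rcases ha with rfl | ⟨n, rfl⟩
  · exact ⟨rfl, rfl⟩
  · exfalso
    rcases hb with h | ⟨m, h⟩
    · exact absurd h (hpα _).ne
    · have := hp.injective h
      omega
end

section
/- Let (X,T) be a dynamical system that satisfies partial specification with periods P for some subset P ⊆ ℕ with bounded gaps. Then (X,T) satisfies partial shadowing: for every ε > 0 there exists δ > 0 such that every finite δ-partial pseudo-orbit in X is ε-partially traced by some point of X. -/
open MeasureTheory Topology

/-- A set of natural numbers is infinite with bounded gaps. -/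
def BoundedGaps (P : Set ℕ) : Prop :=
  P.Infinite ∧ ∃ B : ℕ, ∀ n ∈ P, ∃ m ∈ P, n < m ∧ m ≤ n + B

/-- The data `a i, b i` for `i < r` forms an `M`-spaced specification. -/
def MSpacedSpec (M r : ℕ) (a b : ℕ → ℕ) : Prop :=
  (∀ i < r, a i < b i) ∧ ∀ i, i + 1 < r → b i < a (i + 1) ∧ b i + M ≤ a (i + 1)

/-- The specification `{(x i; a i, b i)}_{i < r}` is `ε`-partially traced by `y`. -/
def PartiallyTraces {X : Type*} [MetricSpace X] (T : X → X) (ε : ℝ)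
    (r : ℕ) (a b : ℕ → ℕ) (x : ℕ → X) (y : X) : Prop :=
  ∀ i < r, (1 - ε) * ((b i : ℝ) - (a i : ℝ)) <
    (({n : ℕ | a i ≤ n ∧ n < b i ∧ dist (T^[n] (x i)) (T^[n] y) < ε}).ncard : ℝ)

/-- `(X,T)` satisfies partial specification with periods `P`. -/
def PartialSpecWithPeriods {X : Type*} [MetricSpace X] (T : X → X) (P : Set ℕ) : Prop :=
  ∀ ε : ℝ, 0 < ε → ∃ N M : ℕ, ∀ r : ℕ, 0 < r → ∀ (a b : ℕ → ℕ) (x : ℕ → X),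
    MSpacedSpec M r a b → ∀ n ∈ P, N ≤ n → (1 + ε) * (b (r - 1) : ℝ) ≤ (n : ℝ) →
      ∃ y : X, T^[n] y = y ∧ PartiallyTraces T ε r a b x y

/-- The finite sequence `x 1, …, x N` is a `δ`-partial pseudo-orbit for `T`. -/
def PartialPseudoOrbit {X : Type*} [MetricSpace X] (T : X → X) (δ : ℝ) (N : ℕ)
    (x : ℕ → X) : Prop :=
  N = 1 ∨ (2 ≤ N ∧ (1 - δ) * ((N : ℝ) - 1) <
    (({n : ℕ | 1 ≤ n ∧ n ≤ N - 1 ∧ dist (T (x n)) (x (n + 1)) < δ}).ncard : ℝ))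

/-- The finite sequence `x 1, …, x N` is `ε`-partially traced by `y`. -/
def SeqPartiallyTraced {X : Type*} [MetricSpace X] (T : X → X) (ε : ℝ) (N : ℕ)
    (x : ℕ → X) (y : X) : Prop :=
  (1 - ε) * (N : ℝ) < (({n : ℕ | 1 ≤ n ∧ n ≤ N ∧ dist (x n) (T^[n] y) < ε}).ncard : ℝ)

/-- Finite shadowing of short pseudo-orbits by true orbits. -/
theorem finite_shadow {X : Type*} [MetricSpace X] [CompactSpace X] (T : X ≃ₜ X) (L : ℕ) :
    ∀ η : ℝ, 0 < η → ∃ δ : ℝ, 0 < δ ∧ ∀ (x : ℕ → X) (a j : ℕ), j ≤ L →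
      (∀ k < j, dist (T (x (a + k))) (x (a + k + 1)) < δ) →
      dist (x (a + j)) (T^[j] (x a)) < η := by
  induction L with
  | zero =>
    intro η hη
    refine ⟨1, one_pos, fun x a j hj _ => ?_⟩
    obtain rfl : j = 0 := by omega
    simpa using hη
  | succ L ih =>
    intro η hη
    have huc : UniformContinuous (T : X → X) :=
      CompactSpace.uniformContinuous_of_continuous T.continuous
    obtain ⟨δ₁, hδ₁, h₁⟩ := Metric.uniformContinuous_iff.1 huc (η / 2) (by positivity)
    obtain ⟨δ₂, hδ₂, h₂⟩ := ih δ₁ hδ₁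
    refine ⟨min δ₂ (η / 2), by positivity, fun x a j hj h => ?_⟩
    rcases j with _ | j
    · simpa using hη
    · have e1 := h₂ x a j (by omega)
        (fun k hk => (h k (by omega)).trans_le (min_le_left _ _))
      have e2 := h₁ e1
      have e3 := (h j (by omega)).trans_le (min_le_right _ _)
      rw [Function.iterate_succ_apply']
      have e4 := dist_triangle_left (x (a + (j + 1))) (T (T^[j] (x a))) (T (x (a + j)))
      have e5 : x (a + (j + 1)) = x (a + j + 1) := by rw [add_assoc]
      rw [e5] at e4 ⊢
      linarith

theorem sum_blocks_le (S : Finset ℕ) (K L r : ℕ) (hLK : L ≤ K) :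
    ∑ i ∈ Finset.range r, (S.filter (fun n => i * K + 1 ≤ n ∧ n < i * K + 1 + L)).card
      ≤ S.card := by
  rw [← Finset.card_biUnion]
  · apply Finset.card_le_card
    intro n hn
    simp only [Finset.mem_biUnion, Finset.mem_filter] at hn
    obtain ⟨_, _, h, _⟩ := hn
    exact h
  · intro i _ j _ hij
    rw [Function.onFun, Finset.disjoint_left]
    intro n hn hm
    simp only [Finset.mem_filter] at hn hm
    rcases lt_or_gt_of_ne hij with h | h
    · have : (i + 1) * K ≤ j * K := Nat.mul_le_mul_right _ h
      have : (i + 1) * K = i * K + K := by ring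
      omega
    · have : (j + 1) * K ≤ i * K := Nat.mul_le_mul_right _ h
      have : (j + 1) * K = j * K + K := by ring
      omega

/-- Partial specification (with some set of periods with bounded gaps) implies partial
shadowing. -/
theorem partial_shadowing_of_partialSpec
    {X : Type*} [MetricSpace X] [CompactSpace X] (T : X ≃ₜ X)
    (P : Set ℕ) (hP : BoundedGaps P) (hspec : PartialSpecWithPeriods ⇑T P) :
    ∀ ε : ℝ, 0 < ε → ∃ δ : ℝ, 0 < δ ∧ ∀ N : ℕ, 0 < N → ∀ x : ℕ → X,
      PartialPseudoOrbit ⇑T δ N x → ∃ y : X, SeqPartiallyTraced ⇑T ε N x y := by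
  classical
  intro ε₀ hε₀
  obtain ⟨ε, hε, hε1, hεε₀⟩ : ∃ ε : ℝ, 0 < ε ∧ ε ≤ 1 / 10 ∧ 5 * ε ≤ ε₀ := by
    refine ⟨min (1 / 10) (ε₀ / 5), by positivity, min_le_left _ _, ?_⟩
    linarith [min_le_right (1 / 10 : ℝ) (ε₀ / 5)]
  obtain ⟨N₀, M, hNM⟩ := hspec ε hε
  obtain ⟨L, hL⟩ := exists_nat_ge (((M : ℝ) + 1) / ε)
  have hL' : (M : ℝ) + 1 ≤ ε * L := by
    rw [div_le_iff₀ hε] at hL; linarith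
  have hLpos : 0 < (L : ℝ) := by
    have : 0 < ε * L := lt_of_lt_of_le (by positivity) hL'
    exact pos_of_mul_pos_right this hε.le
  have hLn : 0 < L := by exact_mod_cast hLpos
  obtain ⟨K, hK⟩ : ∃ K, K = L + M + 1 := ⟨_, rfl⟩
  obtain ⟨N₁', hN₁'⟩ := exists_nat_ge ((L : ℝ) / ε)
  obtain ⟨N₁, hN₁⟩ : ∃ N₁, N₁ = max N₁' K := ⟨_, rfl⟩
  obtain ⟨δ₁, hδ₁, hsh⟩ := finite_shadow T N₁ ε hε
  obtain ⟨δ, hδ, hδ1, hδ2, hδ3⟩ : ∃ δ : ℝ, 0 < δ ∧ δ ≤ δ₁ ∧ δ * N₁ ≤ 1 ∧ δ * L ≤ ε := by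
    have hN₁pos : (0 : ℝ) < N₁ := by
      have : 0 < N₁ := by omega
      exact_mod_cast this
    refine ⟨min δ₁ (min (1 / N₁) (ε / L)), by positivity, min_le_left _ _, ?_, ?_⟩
    · rw [← le_div_iff₀ hN₁pos]
      exact (min_le_right _ _).trans (min_le_left _ _)
    · rw [← le_div_iff₀ hLpos]
      exact (min_le_right _ _).trans (min_le_right _ _)
  refine ⟨δ, hδ, fun N hN x hx => ?_⟩
  -- the set of bad indices
  obtain ⟨B, hB⟩ : ∃ B : Finset ℕ, B = (Finset.Icc 1 (N - 1)).filter
    (fun n => ¬ dist (T (x n)) (x (n + 1)) < δ) := ⟨_, rfl⟩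
  have hBcard : (B.card : ℝ) ≤ δ * (N - 1) ∧ (2 ≤ N → (B.card : ℝ) < δ * (N - 1)) := by
    rcases hx with rfl | ⟨h2, hx⟩
    · simp [hB]
    · have e1 : {n : ℕ | 1 ≤ n ∧ n ≤ N - 1 ∧ dist (T (x n)) (x (n + 1)) < δ} =
          ((Finset.Icc 1 (N - 1)).filter (fun n => dist (T (x n)) (x (n + 1)) < δ) : Finset ℕ) := by
        ext n; simp [and_assoc]
      rw [e1, Set.ncard_coe_finset] at hx
      have e2 := Finset.card_filter_add_card_filter_not (s := Finset.Icc 1 (N - 1))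
        (fun n => dist (T (x n)) (x (n + 1)) < δ)
      rw [← hB, Nat.card_Icc] at e2
      have e3 : (((Finset.Icc 1 (N - 1)).filter
        (fun n => dist (T (x n)) (x (n + 1)) < δ)).card : ℝ) + B.card = N - 1 := by
        have : ((Finset.Icc 1 (N - 1)).filter
          (fun n => dist (T (x n)) (x (n + 1)) < δ)).card + B.card + 1 = N := by omega
        have := congrArg (Nat.cast : ℕ → ℝ) this
        push_cast at this
        linarith
      have : (B.card : ℝ) < δ * (N - 1) := by linarith
      exact ⟨this.le, fun _ => this⟩
  have hNpos : (0 : ℝ) < N := by exact_mod_cast hN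
  have hgood : ∀ n, 1 ≤ n → n ≤ N - 1 → n ∉ B → dist (T (x n)) (x (n + 1)) < δ₁ := by
    intro n h1 h2 h3
    have : dist (T (x n)) (x (n + 1)) < δ := by
      by_contra h
      exact h3 (by rw [hB, Finset.mem_filter, Finset.mem_Icc]; exact ⟨⟨h1, h2⟩, h⟩)
    linarith
  -- finset form of the conclusion
  have hfin : ∀ y : X, {n : ℕ | 1 ≤ n ∧ n ≤ N ∧ dist (x n) (T^[n] y) < ε₀} =
      ((Finset.Icc 1 N).filter (fun n => dist (x n) (T^[n] y) < ε₀) : Finset ℕ) := by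
    intro y; ext n; simp [and_assoc]
  have hinv : ∀ (a : ℕ) (z : X), T^[a] (T.symm^[a] z) = z := fun a z =>
    (Function.LeftInverse.iterate T.apply_symm_apply a) z
  by_cases hNN : N ≤ N₁
  · -- short sequences are genuine pseudo-orbits
    have hB0 : B = ∅ := by
      rw [← Finset.card_eq_zero]
      have h1 : (N : ℝ) ≤ N₁ := by exact_mod_cast hNN
      have h2 : δ * ((N : ℝ) - 1) < 1 := by nlinarith
      have h3 : (B.card : ℝ) < 1 := hBcard.1.trans_lt h2
      have : B.card < 1 := by exact_mod_cast h3
      omega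
    refine ⟨T.symm (x 1), ?_⟩
    rw [SeqPartiallyTraced, hfin, Set.ncard_coe_finset, Finset.filter_true_of_mem]
    · rw [Nat.card_Icc]; push_cast [Nat.add_sub_cancel]; nlinarith
    · intro n hn
      rw [Finset.mem_Icc] at hn
      obtain ⟨j, rfl⟩ : ∃ j, n = 1 + j := ⟨n - 1, by omega⟩
      have := hsh x 1 j (by omega) (fun k hk => hgood _ (by omega) (by omega) (by simp [hB0]))
      rw [add_comm 1 j, Function.iterate_add_apply, Function.iterate_one, T.apply_symm_apply,
        add_comm j 1]
      linarith
  · have hKpos : 0 < K := by omega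
    obtain ⟨r, hr⟩ : ∃ r, r = N / K := ⟨_, rfl⟩
    have hrK : r * K ≤ N := hr ▸ Nat.div_mul_le_self N K
    have hrK' : N < (r + 1) * K := by
      rw [hr, mul_comm]; exact Nat.lt_mul_div_succ N hKpos
    have hr0 : 0 < r := hr ▸ Nat.div_pos (by omega) hKpos
    obtain ⟨m₀, hm₀⟩ := exists_nat_ge ((1 + ε) * (((r - 1) * K + 1 + L : ℕ) : ℝ))
    obtain ⟨m, hmP, hm⟩ := hP.1.exists_gt (max N₀ m₀)
    have hmN : N₀ ≤ m := by omega
    have hmm : (m₀ : ℝ) ≤ m := by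
      have : m₀ ≤ m := by omega
      exact_mod_cast this
    obtain ⟨y, -, hy⟩ := hNM r hr0 (fun i => i * K + 1) (fun i => i * K + 1 + L)
      (fun i => T.symm^[i * K + 1] (x (i * K + 1)))
      ⟨fun i _ => by simp only []; omega, fun i _ => by
        have : (i + 1) * K = i * K + K := by ring
        simp only []
        omega⟩ m hmP hmN (hm₀.trans hmm)
    refine ⟨y, ?_⟩
    rw [SeqPartiallyTraced, hfin, Set.ncard_coe_finset]
    obtain ⟨S, hS⟩ : ∃ S, S = (Finset.Icc 1 N).filter (fun n => dist (x n) (T^[n] y) < ε₀) :=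
      ⟨_, rfl⟩
    rw [← hS]
    have hblock : ∀ i ∈ Finset.range r, (1 - ε) * (L : ℝ) -
        L * ((B.filter (fun n => i * K + 1 ≤ n ∧ n < i * K + 1 + L)).card : ℝ) ≤
        ((S.filter (fun n => i * K + 1 ≤ n ∧ n < i * K + 1 + L)).card : ℝ) := by
      intro i hi
      rw [Finset.mem_range] at hi
      have hiK : (i + 1) * K ≤ r * K := Nat.mul_le_mul_right _ hi
      have hiK' : (i + 1) * K = i * K + K := by ring
      rcases (B.filter (fun n => i * K + 1 ≤ n ∧ n < i * K + 1 + L)).eq_empty_or_nonempty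
        with he | hne
      · rw [he]
        have h1 := hy i hi
        simp only [] at h1
        have h2 : ((({n : ℕ | i * K + 1 ≤ n ∧ n < i * K + 1 + L ∧
            dist (T^[n] (T.symm^[i * K + 1] (x (i * K + 1)))) (T^[n] y) < ε}).ncard : ℕ) : ℝ) ≤
            ((S.filter (fun n => i * K + 1 ≤ n ∧ n < i * K + 1 + L)).card : ℝ) := by
          rw [← Set.ncard_coe_finset]
          apply Nat.cast_le.2
          apply Set.ncard_le_ncard _ (Finset.finite_toSet _)
          rintro n ⟨hn1, hn2, hn3⟩
          rw [Finset.mem_coe, Finset.mem_filter, hS, Finset.mem_filter, Finset.mem_Icc]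
          refine ⟨⟨⟨by omega, by omega⟩, ?_⟩, hn1, hn2⟩
          obtain ⟨j, rfl⟩ : ∃ j, n = i * K + 1 + j := ⟨n - (i * K + 1), by omega⟩
          have h3 := hsh x (i * K + 1) j (by omega) (fun k hk => hgood _ (by omega) (by omega)
            (fun hb => by
              have : i * K + 1 + k ∈ (∅ : Finset ℕ) := by
                rw [← he, Finset.mem_filter]
                exact ⟨hb, by omega, by omega⟩
              simp at this))
          have h4 : T^[i * K + 1 + j] (T.symm^[i * K + 1] (x (i * K + 1))) =
              T^[j] (x (i * K + 1)) := by
            rw [add_comm (i * K + 1) j, Function.iterate_add_apply, hinv]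
          rw [h4] at hn3
          have := dist_triangle (x (i * K + 1 + j)) (T^[j] (x (i * K + 1))) (T^[i * K + 1 + j] y)
          linarith
        push_cast at h1 h2 ⊢
        simp only [Finset.card_empty, Nat.cast_zero]
        have h5 : ((i : ℝ) * K + 1 + L - (i * K + 1)) = L := by ring
        rw [h5] at h1
        linarith
      · have h1 : (1 : ℝ) ≤ (B.filter (fun n => i * K + 1 ≤ n ∧ n < i * K + 1 + L)).card := by
          exact_mod_cast hne.card_pos
        have h2 : (0 : ℝ) ≤ ((S.filter (fun n => i * K + 1 ≤ n ∧ n < i * K + 1 + L)).card : ℝ) :=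
          Nat.cast_nonneg _
        nlinarith [mul_pos hε hLpos]
    have hsum := Finset.sum_le_sum hblock
    rw [Finset.sum_sub_distrib, Finset.sum_const, Finset.card_range, nsmul_eq_mul,
      ← Finset.mul_sum] at hsum
    have hSs : (∑ i ∈ Finset.range r,
        ((S.filter (fun n => i * K + 1 ≤ n ∧ n < i * K + 1 + L)).card : ℝ)) ≤ S.card := by
      exact_mod_cast sum_blocks_le S K L r (by omega)
    have hBs : (∑ i ∈ Finset.range r,
        ((B.filter (fun n => i * K + 1 ≤ n ∧ n < i * K + 1 + L)).card : ℝ)) ≤ B.card := by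
      exact_mod_cast sum_blocks_le B K L r (by omega)
    have hBL := mul_le_mul_of_nonneg_left hBs hLpos.le
    have hBN : (L : ℝ) * B.card ≤ ε * N := by
      have h1 : (L : ℝ) * B.card ≤ L * (δ * N) := by
        apply mul_le_mul_of_nonneg_left _ hLpos.le
        nlinarith [hBcard.1]
      have h2 : δ * L * N ≤ ε * N := mul_le_mul_of_nonneg_right hδ3 hNpos.le
      nlinarith
    have hNL : (L : ℝ) ≤ ε * N := by
      have h1 : (N₁' : ℝ) ≤ N := by
        have : N₁' ≤ N := by omega
        exact_mod_cast this
      have h2 := hN₁'.trans h1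
      rw [div_le_iff₀ hε] at h2
      linarith
    have hKr : (K : ℝ) ≤ (1 + ε) * L := by rw [hK]; push_cast; linarith
    have hNr : (N : ℝ) ≤ (r + 1) * ((1 + ε) * L) := by
      have h1 : (N : ℝ) ≤ (r + 1) * K := by exact_mod_cast hrK'.le
      exact h1.trans (mul_le_mul_of_nonneg_left hKr (by positivity))
    have hrL : (1 - 2 * ε) * N ≤ r * L := by
      have h1 : (1 - ε) * N ≤ (r + 1) * L := by
        have h2 := mul_le_mul_of_nonneg_left hNr (show (0 : ℝ) ≤ 1 - ε by linarith)
        have h3 : (0 : ℝ) ≤ ε ^ 2 * ((r + 1) * L) := by positivity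
        nlinarith
      linarith
    have hfinal : (1 - ε) * ((1 - 2 * ε) * N) ≤ (1 - ε) * (r * L) :=
      mul_le_mul_of_nonneg_left hrL (by linarith)
    have h5 : (1 - ε₀) * (N : ℝ) ≤ (1 - 5 * ε) * N :=
      mul_le_mul_of_nonneg_right (by linarith) hNpos.le
    have h6 : (1 - ε) * ((r : ℝ) * L) = r * ((1 - ε) * L) := by ring
    have h7 : (1 - ε) * ((1 - 2 * ε) * (N : ℝ)) = N - 3 * (ε * N) + 2 * (ε * ε * N) := by ring
    have h8 : (1 - 5 * ε) * (N : ℝ) = N - 5 * (ε * N) := by ring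
    have h9 := mul_pos hε hNpos
    have h10 := mul_pos (mul_pos hε hε) hNpos
    linarith
end

section
/- Let G be an abelian group (written multiplicatively) equipped with a G-invariant metric d_G, and let g₁,…,g_r ∈ G be elements of infinite order. Then for every c ∈ ℕ there exists a subset P ⊆ {cn : n ∈ ℕ} with bounded gaps such that inf { d_G(g_iⁿ, 1) : 1 ≤ i ≤ r, n ∈ P } > 0. -/
open MeasureTheory Topology

/-- In an abelian group with an invariant metric, given finitely many elements of infinite
order, for every `c` there is a set `P ⊆ cℕ` with bounded gaps on which all the powers
`gᵢⁿ`, `n ∈ P`, stay uniformly away from the identity. -/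
theorem exists_bounded_gaps_powers_away_from_one
    {G : Type*} [CommGroup G] [MetricSpace G]
    (hinv : ∀ g x y : G, dist (g * x) (g * y) = dist x y)
    (r : ℕ) (g : Fin r → G) (hord : ∀ i : Fin r, ∀ n : ℕ, 0 < n → g i ^ n ≠ 1)
    (c : ℕ) (hc : 0 < c) :
    ∃ P : Set ℕ, P ⊆ {m | ∃ n : ℕ, 0 < n ∧ m = c * n} ∧ BoundedGaps P ∧
      ∃ ε : ℝ, 0 < ε ∧ ∀ i : Fin r, ∀ n ∈ P, ε ≤ dist (g i ^ n) 1 := by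
  obtain ⟨ε, hε, hmin⟩ : ∃ ε : ℝ, 0 < ε ∧ ∀ p : Fin r × Fin r,
      2 * ε ≤ dist (g p.1 ^ (c * ((p.2 : ℕ) + 1))) 1 := by
    have h : ∀ᶠ ε in 𝓝[>] (0 : ℝ), ∀ p : Fin r × Fin r,
        ε < dist (g p.1 ^ (c * ((p.2 : ℕ) + 1))) 1 / 2 := by
      rw [Filter.eventually_all]
      intro p
      have hp : 0 < dist (g p.1 ^ (c * ((p.2 : ℕ) + 1))) 1 :=
        dist_pos.2 (hord _ _ (by positivity))
      exact nhdsWithin_le_nhds (Iio_mem_nhds (by linarith))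
    obtain ⟨ε, h1, h2⟩ := (h.and self_mem_nhdsWithin).exists
    exact ⟨ε, h2, fun p => by linarith [h1 p]⟩
  have key : ∀ i : Fin r, ∀ n a b : ℕ, a < b → b ≤ a + r →
      dist (g i ^ (c * (n + a))) 1 < ε → dist (g i ^ (c * (n + b))) 1 < ε → False := by
    intro i n a b hab hb h1 h2
    have h3 := hmin (i, ⟨b - a - 1, by omega⟩)
    have e1 : b - a - 1 + 1 = b - a := by omega
    simp only [e1] at h3
    have h4 := hinv (g i ^ (c * (n + a))) (g i ^ (c * (b - a))) 1
    rw [← pow_add, ← Nat.mul_add, mul_one] at h4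
    have e2 : n + a + (b - a) = n + b := by omega
    rw [e2] at h4
    have h5 := dist_triangle_right (g i ^ (c * (n + b))) (g i ^ (c * (n + a))) 1
    linarith
  have win : ∀ n : ℕ, ∃ k, n < k ∧ k ≤ n + (r + 1) ∧
      ∀ i : Fin r, ε ≤ dist (g i ^ (c * k)) 1 := by
    intro n
    by_contra! hcon
    have hbad : ∀ a : Fin (r + 1), ∃ i : Fin r, dist (g i ^ (c * (n + 1 + (a : ℕ)))) 1 < ε :=
      fun a => hcon _ (by omega) (by omega)
    choose f hf using hbad
    obtain ⟨a, b, hab, hfab⟩ := Fintype.exists_ne_map_eq_of_card_lt f (by simp)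
    have ha := hf a
    have hb := hf b
    rw [← hfab] at hb
    have hne : (a : ℕ) ≠ b := fun h => hab (Fin.ext h)
    rcases lt_or_gt_of_ne hne with h | h
    · exact key _ _ _ _ h (by omega) ha hb
    · exact key _ _ _ _ h (by omega) hb ha
  refine ⟨{m | ∃ n : ℕ, (0 < n ∧ m = c * n) ∧ ∀ i : Fin r, ε ≤ dist (g i ^ (c * n)) 1},
    ?_, ⟨?_, c * (r + 1), ?_⟩, ε, hε, ?_⟩
  · rintro m ⟨n, h, -⟩
    exact ⟨n, h⟩
  · refine Set.infinite_of_forall_exists_gt fun a => ?_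
    obtain ⟨k, h1, -, h3⟩ := win a
    exact ⟨c * k, ⟨k, ⟨by omega, rfl⟩, h3⟩, by nlinarith⟩
  · rintro _ ⟨n, ⟨hn, rfl⟩, -⟩
    obtain ⟨k, h1, h2, h3⟩ := win n
    refine ⟨c * k, ⟨k, ⟨by omega, rfl⟩, h3⟩, Nat.mul_lt_mul_of_pos_left h1 hc, ?_⟩
    rw [← Nat.mul_add]
    exact Nat.mul_le_mul_left c h2
  · rintro i _ ⟨n, ⟨-, rfl⟩, h⟩
    exact h i
end

section
/- Let S be a group acting on a measurable space X such that each element of S acts measurably, and suppose the action is transitive. Let ν be an S-invariant probability measure on X, and suppose H is a normal subgroup of S such that the quotient group S/H is countable and every H-orbit in X is a measurable set. Then ν is supported on finitely many H-orbits, i.e., there exist finitely many points x₁,…,x_k ∈ X with ν(H·x₁ ∪ ⋯ ∪ H·x_k) = 1. -/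
open MeasureTheory

/-- If a group `S` acts measurably and transitively on a measurable space preserving a
probability measure `ν`, and `H` is a normal subgroup with countable quotient `S/H` whose
orbits are measurable, then `ν` is supported on finitely many `H`-orbits. -/
theorem measure_supported_on_finitely_many_orbits
    {S X : Type*} [Group S] [MeasurableSpace X] [MulAction S X]
    (hmeas : ∀ s : S, Measurable fun x : X => s • x)
    (htrans : ∀ x y : X, ∃ s : S, s • x = y)
    (ν : Measure X) (hνp : IsProbabilityMeasure ν)
    (hνinv : ∀ s : S, Measure.map (fun x : X => s • x) ν = ν)
    (H : Subgroup S) (hH : H.Normal) (hcount : Countable (S ⧸ H))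
    (horb : ∀ x : X, MeasurableSet (MulAction.orbit H x)) :
    ∃ (k : ℕ) (x : Fin k → X), ν (⋃ i, MulAction.orbit H (x i)) = 1 := by
  classical
  obtain ⟨x0⟩ : Nonempty X := by
    by_contra h
    rw [not_nonempty_iff] at h
    have h1 := hνp.measure_univ
    rw [Set.univ_eq_empty_iff.mpr h, measure_empty] at h1
    exact zero_ne_one h1
  let O : MulAction.orbitRel.Quotient H X → Set X := fun q => MulAction.orbit H q.out
  have hOmk : ∀ y : X, O (Quotient.mk'' y) = MulAction.orbit H y := by
    intro y
    have h : (MulAction.orbitRel H X) (Quotient.out (Quotient.mk'' y : MulAction.orbitRel.Quotient H X)) y :=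
      Quotient.mk_out (s := MulAction.orbitRel H X) y
    exact MulAction.orbit_eq_iff.mpr h
  have hmem : ∀ (y : X) (q : MulAction.orbitRel.Quotient H X), y ∈ O q → q = Quotient.mk'' y := by
    intro y q hy
    rw [← Quotient.out_eq' q]
    exact (Quotient.sound' (s₁ := MulAction.orbitRel H X) hy).symm
  have hpre : ∀ (s : S) (y : X),
      (fun x : X => s • x) ⁻¹' (MulAction.orbit H (s • y)) = MulAction.orbit H y := by
    intro s y
    ext z
    simp only [Set.mem_preimage, MulAction.mem_orbit_iff]
    constructor
    · rintro ⟨⟨h, hh⟩, e⟩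
      refine ⟨⟨s⁻¹ * h * s, by simpa using hH.conj_mem h hh s⁻¹⟩, ?_⟩
      change h • s • y = s • z at e
      change (s⁻¹ * h * s) • y = z
      rw [mul_smul, mul_smul, e, inv_smul_smul]
    · rintro ⟨⟨h, hh⟩, e⟩
      refine ⟨⟨s * h * s⁻¹, hH.conj_mem h hh s⟩, ?_⟩
      change h • y = z at e
      change (s * h * s⁻¹) • s • y = s • z
      rw [mul_smul, mul_smul, inv_smul_smul, e]
  have hconst : ∀ y : X, ν (MulAction.orbit H y) = ν (MulAction.orbit H x0) := by
    intro y
    obtain ⟨s, rfl⟩ := htrans x0 y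
    conv_lhs => rw [← hνinv s]
    rw [Measure.map_apply (hmeas s) (horb _), hpre]
  have hcQ : Countable (MulAction.orbitRel.Quotient H X) := by
    have hsurj : Function.Surjective (fun q : S ⧸ H =>
        (Quotient.mk'' (q.out • x0) : MulAction.orbitRel.Quotient H X)) := by
      intro p
      obtain ⟨y, rfl⟩ := Quotient.exists_rep p
      obtain ⟨s, rfl⟩ := htrans x0 y
      refine ⟨(s : S ⧸ H), ?_⟩
      obtain ⟨h, hh⟩ := QuotientGroup.mk_out_eq_mul H s
      apply Quotient.sound' (s₁ := MulAction.orbitRel H X)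
      refine ⟨⟨s * h * s⁻¹, hH.conj_mem h h.2 s⟩, ?_⟩
      change (s * h * s⁻¹) • s • x0 = _
      rw [hh, smul_smul]
      simp
    exact hsurj.countable
  have hU : (⋃ q, O q) = Set.univ := by
    apply Set.eq_univ_of_forall
    intro y
    refine Set.mem_iUnion.mpr ⟨Quotient.mk'' y, ?_⟩
    rw [hOmk]
    exact MulAction.mem_orbit_self y
  have hsum : ∑' _q : MulAction.orbitRel.Quotient H X, ν (MulAction.orbit H x0) = 1 := by
    rw [← hνp.measure_univ, ← hU, measure_iUnion]
    · exact tsum_congr fun q => (hconst _).symm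
    · intro p q hpq
      refine Set.disjoint_left.mpr fun y hp hq => hpq ?_
      rw [hmem y p hp, hmem y q hq]
    · exact fun q => horb _
  have hfin : Finite (MulAction.orbitRel.Quotient H X) := by
    by_contra hinf
    rw [not_finite_iff_infinite] at hinf
    by_cases hc : ν (MulAction.orbit H x0) = 0
    · simp [hc] at hsum
    · rw [ENNReal.tsum_const_eq_top_of_ne_zero hc] at hsum
      exact ENNReal.top_ne_one hsum
  obtain ⟨k, ⟨e⟩⟩ := Finite.exists_equiv_fin (MulAction.orbitRel.Quotient H X)
  refine ⟨k, fun i => (e.symm i).out, ?_⟩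
  have : (⋃ i, MulAction.orbit H (e.symm i).out) = Set.univ := by
    rw [← hU]
    exact e.symm.surjective.iUnion_comp O
  rw [this, hνp.measure_univ]
end
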